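/- Let 𝓑 be an admissible W-orbit of sets of mutually orthogonal positive roots, B ∈ 𝓑, and let i ≠ j be nodes with i ≁ j. If B < r_i·B, B < r_j·B and r_i·B ≠ r_j·B, then r_i r_j·B > r_i·B and r_i r_j·B > r_j·B. -/

import Mathlib

/-!
If `α i ∉ B`, then `r i · B` is the honest image of `B` under `r i`. An element `β ∈ B` is moved
iff `⟪β, α i⟫ ≠ 0`, and it cannot be moved into `B`, since `β` and `r i β` are not orthogonal. Hence `B < r i · B` amounts to the following (`lt_rAct_iff`): some
`β₀ ∈ B` has `⟪β₀, α i⟫ = -1`, and every `β ∈ B` with `⟪β, α i⟫ = 1` satisfies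
`ht β ≥ ht β₀ + 2`.

For orthogonal `α i`, `α j`, applying `r j` preserves the products with `α i` and changes the
height of `β` by `-⟪β, α j⟫`. So the criterion for `r j · B < r i r j · B` can fail at the image
of `β₀` only because of some `β` with `⟪β, α i⟫ = 1` and `t = ⟪β, α j⟫ > t₀ = ⟪β₀, α j⟫`:

* `t₀ = -1`, `t = 1`: then `β = β₀ + α i + α j` (equality in Bessel's inequality), and the pair
  `β - α j`, `β₀ + α j` in `r j · B` together with admissibility gives `r i r j · B = B`,
  that is `r i · B = r j · B`;
* `t₀ = -1`, `t = 0`, `ht β = ht β₀ + 2`: then `β - α i - β₀ - α j` is a root of height zero;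
* `t₀ = 0`, `t = 1`, `ht β = ht β₀ + 2`: then `β - α i - α j - β₀` is a root of height zero.

Roots of height zero do not exist, so the criterion holds (`lt_step`). The two halves of the
theorem are this statement with `i`, `j` in either order, because the two reflections commute.
-/

open scoped InnerProductSpace

/-- A finite crystallographic simply laced root system `Φ` in a real inner
product space, normalized so that `⟪β, β⟫ = 2` for all roots, together with a
fixed base `α 1, …, α n` (the nodes of the diagram `M`), the corresponding set
`Pos` of positive roots, and the height linear functional `ht`. -/
structure SLRS (V : Type) [NormedAddCommGroup V] [InnerProductSpace ℝ V] where
  /-- the number of nodes of the diagram -/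
  n : ℕ
  /-- the set of roots -/
  Φ : Set V
  /-- the set of positive roots -/
  Pos : Set V
  /-- the simple roots -/
  α : Fin n → V
  /-- the height functional: heights are sums of coefficients on simple roots -/
  ht : V →ₗ[ℝ] ℝ
  finite : Φ.Finite
  pos_subset : Pos ⊆ Φ
  mem_pos_or_neg : ∀ β ∈ Φ, β ∈ Pos ∨ -β ∈ Pos
  not_pos_and_neg : ∀ β ∈ Pos, -β ∉ Pos
  alpha_pos : ∀ i, α i ∈ Pos
  norm_two : ∀ β ∈ Φ, ⟪β, β⟫_ℝ = 2
  inner_int : ∀ β ∈ Φ, ∀ γ ∈ Φ, ∃ z : ℤ, ⟪β, γ⟫_ℝ = (z : ℝ)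
  reflect_mem : ∀ β ∈ Φ, ∀ γ ∈ Φ, β - ⟪β, γ⟫_ℝ • γ ∈ Φ
  reduced : ∀ β ∈ Φ, ∀ t : ℝ, t • β ∈ Φ → t = 1 ∨ t = -1
  pos_coeff : ∀ β ∈ Pos, ∃ a : Fin n → ℕ, β = ∑ i, (a i : ℝ) • α i
  ht_alpha : ∀ i, ht (α i) = 1

namespace SLRS

variable {V : Type} [NormedAddCommGroup V] [InnerProductSpace ℝ V] (S : SLRS V)

/-- Adjacency of two nodes of the diagram: `i ∼ j` iff `⟪α i, α j⟫ = -1`. -/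
def adj (i j : Fin S.n) : Prop := ⟪S.α i, S.α j⟫_ℝ = -1

/-- The reflection along a root `δ` (normalized so that `⟪δ, δ⟫ = 2`). -/
def reflRoot (δ : V) : V → V := fun v => v - ⟪v, δ⟫_ℝ • δ

/-- The fundamental reflection `r i`. -/
def refl (i : Fin S.n) : V → V := reflRoot (S.α i)

/-- A set of mutually orthogonal positive roots. -/
def IsOrthoSet (B : Set V) : Prop :=
  B ⊆ S.Pos ∧ ∀ β ∈ B, ∀ γ ∈ B, β ≠ γ → ⟪β, γ⟫_ℝ = 0

/-- The action of a map `w` on a set `B` of positive roots: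
`w·B = Φ⁺ ∩ {± w β : β ∈ B}`. -/
def mapSet (w : V → V) (B : Set V) : Set V :=
  {x ∈ S.Pos | ∃ β ∈ B, w β = x ∨ w β = -x}

/-- The action of the fundamental reflection `r i` on a set of positive roots. -/
def rAct (i : Fin S.n) (B : Set V) : Set V := S.mapSet (S.refl i) B

/-- The action of the reflection along a root `δ` on a set of positive roots. -/
def reflAct (δ : V) (B : Set V) : Set V := S.mapSet (reflRoot δ) B

/-- The `W`-orbit of `B`, `W` being generated by the fundamental reflections. -/
def orbitOf (B : Set V) : Set (Set V) :=
  {C | Relation.ReflTransGen (fun X Y => ∃ i, Y = S.rAct i X) B C}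

/-- `𝓑` is a `W`-orbit of sets of mutually orthogonal positive roots. -/
def IsOrbit (𝓑 : Set (Set V)) : Prop :=
  ∃ B, S.IsOrthoSet B ∧ 𝓑 = S.orbitOf B

/-- Admissibility of a `W`-orbit of sets of mutually orthogonal positive roots. -/
def Admissible (𝓑 : Set (Set V)) : Prop :=
  S.IsOrbit 𝓑 ∧ ∀ B ∈ 𝓑, ∀ i j : Fin S.n, i ≠ j → ¬ S.adj i j →
    (∃ γ, γ ∈ B ∧ γ - S.α i + S.α j ∈ B) → S.rAct i B = S.rAct j B

/-- The height order: `B < C` iff `B ≠ C` and the minimal height of an element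
of `B \ C` is smaller than the minimal height of an element of `C \ B`. -/
def lt (B C : Set V) : Prop :=
  B ≠ C ∧ sInf (⇑S.ht '' (B \ C)) < sInf (⇑S.ht '' (C \ B))

/-- The map `V → V` determined by the word `l = [i₁, …, iₛ]`,
namely `r i₁ ∘ r i₂ ∘ ⋯ ∘ r iₛ`. -/
def wordMap (l : List (Fin S.n)) : V → V := l.foldr (fun i f => S.refl i ∘ f) id

/-- A map belongs to the Weyl group `W` iff it is realized by a word in the
fundamental reflections. -/
def InW (w : V → V) : Prop := ∃ l : List (Fin S.n), S.wordMap l = w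

/-- The Coxeter length of an element of `W`: the minimal length of a word in
the fundamental reflections representing it. -/
noncomputable def len (w : V → V) : ℕ :=
  sInf {k | ∃ l : List (Fin S.n), l.length = k ∧ S.wordMap l = w}

/-- The action of `w ∈ W` on a set of positive roots. -/
def wAct (w : V → V) (B : Set V) : Set V := S.mapSet w B

/-- `r i₁ · (r i₂ · ⋯ (r iₛ · B))` for the word `l = [i₁, …, iₛ]`. -/
def suffixAct (l : List (Fin S.n)) (B : Set V) : Set V := l.foldr S.rAct B

/-- The chain `B > r iₛ · B > r iₛ₋₁ r iₛ · B > ⋯ > r i₁ ⋯ r iₛ · B` obtained by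
successively applying the letters of the word `l = [i₁, …, iₛ]` to `B` is
strictly descending at every step. -/
def DescChain (l : List (Fin S.n)) (B : Set V) : Prop :=
  ∀ k < l.length, S.lt (S.suffixAct (l.drop k) B) (S.suffixAct (l.drop (k + 1)) B)

end SLRS

open SLRS

variable {V : Type} [NormedAddCommGroup V] [InnerProductSpace ℝ V]

namespace SLRS

section Aux

variable (S : SLRS V)

/-! ### Roots and heights -/

theorem alpha_root (i : Fin S.n) : S.α i ∈ S.Φ := S.pos_subset (S.alpha_pos i)

theorem pos_ht {β : V} (h : β ∈ S.Pos) : ∃ n : ℕ, 1 ≤ n ∧ S.ht β = n := by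
  obtain ⟨a, ha⟩ := S.pos_coeff β h
  have hh : S.ht β = ((∑ k, a k : ℕ) : ℝ) := by
    rw [ha]; simp [S.ht_alpha]
  refine ⟨∑ k, a k, ?_, hh⟩
  by_contra! hlt
  have h0 : ∀ k, a k = 0 := by
    have : ∑ k, a k = 0 := by omega
    simpa using this
  have hβ : β = 0 := by rw [ha]; simp [h0]
  have := S.norm_two β (S.pos_subset h)
  simp [hβ] at this

theorem root_ht_ne {β : V} (h : β ∈ S.Φ) : S.ht β ≠ 0 := by
  rcases S.mem_pos_or_neg β h with h | h
  · obtain ⟨n, hn, he⟩ := S.pos_ht h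
    rw [he]; positivity
  · obtain ⟨n, hn, he⟩ := S.pos_ht h
    have : (0 : ℝ) < n := by exact_mod_cast hn
    rw [map_neg] at he
    intro h0; linarith

theorem sub_root {β γ : V} (hβ : β ∈ S.Φ) (hγ : γ ∈ S.Φ) (h : ⟪β, γ⟫_ℝ = 1) : β - γ ∈ S.Φ := by
  have := S.reflect_mem β hβ γ hγ
  rwa [h, one_smul] at this

theorem inner_cases {β γ : V} (hβ : β ∈ S.Pos) (hγ : γ ∈ S.Pos) :
    β = γ ∨ ⟪β, γ⟫_ℝ = -1 ∨ ⟪β, γ⟫_ℝ = 0 ∨ ⟪β, γ⟫_ℝ = 1 := by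
  have h1 := S.norm_two β (S.pos_subset hβ)
  have h2 := S.norm_two γ (S.pos_subset hγ)
  obtain ⟨z, hz⟩ := S.inner_int β (S.pos_subset hβ) γ (S.pos_subset hγ)
  have hsub : ⟪β - γ, β - γ⟫_ℝ = 4 - 2 * z := by
    rw [real_inner_sub_sub_self, h1, h2, hz]; ring
  have hadd : ⟪β + γ, β + γ⟫_ℝ = 4 + 2 * z := by
    rw [real_inner_add_add_self, h1, h2, hz]; ring
  have hu : z ≤ 2 := by
    have : ⟪β - γ, β - γ⟫_ℝ ≥ 0 := real_inner_self_nonneg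
    have : (z : ℝ) ≤ 2 := by linarith
    exact_mod_cast this
  have hl : -2 ≤ z := by
    have : ⟪β + γ, β + γ⟫_ℝ ≥ 0 := real_inner_self_nonneg
    have : (-2 : ℝ) ≤ z := by linarith
    exact_mod_cast this
  by_cases e2 : z = 2
  · left
    rw [e2] at hsub
    norm_num at hsub
    exact sub_eq_zero.1 hsub
  by_cases e3 : z = -2
  · rw [e3] at hadd
    norm_num at hadd
    exact absurd (by rwa [← eq_neg_of_add_eq_zero_right hadd]) (S.not_pos_and_neg β hβ)
  right
  have : z = -1 ∨ z = 0 ∨ z = 1 := by omega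
  rw [hz]
  rcases this with rfl | rfl | rfl <;> simp

theorem alpha_orth {i j : Fin S.n} (hne : S.α i ≠ S.α j) (h : ¬ S.adj i j) :
    ⟪S.α i, S.α j⟫_ℝ = 0 := by
  rcases S.inner_cases (S.alpha_pos i) (S.alpha_pos j) with h1 | h1 | h1 | h1
  · exact absurd h1 hne
  · exact absurd h1 h
  · exact h1
  · exact absurd (by simp [S.ht_alpha])
      (S.root_ht_ne (S.sub_root (S.alpha_root i) (S.alpha_root j) h1))

/-! ### The action of a fundamental reflection -/

theorem refl_apply (i : Fin S.n) (v : V) : S.refl i v = v - ⟪v, S.α i⟫_ℝ • S.α i := rfl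

theorem inner_refl_refl (i : Fin S.n) (v w : V) : ⟪S.refl i v, S.refl i w⟫_ℝ = ⟪v, w⟫_ℝ := by
  simp only [refl_apply, inner_sub_left, inner_sub_right, inner_smul_left, inner_smul_right,
    S.norm_two _ (S.alpha_root i), real_inner_comm w (S.α i)]
  simp
  ring

theorem inner_refl_alpha (i : Fin S.n) (v : V) : ⟪S.refl i v, S.α i⟫_ℝ = -⟪v, S.α i⟫_ℝ := by
  simp only [refl_apply, inner_sub_left, inner_smul_left, S.norm_two _ (S.alpha_root i)]
  simp
  ring

theorem refl_refl (i : Fin S.n) (v : V) : S.refl i (S.refl i v) = v := by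
  rw [S.refl_apply i (S.refl i v), inner_refl_alpha, refl_apply]; simp

theorem ht_refl (i : Fin S.n) (v : V) : S.ht (S.refl i v) = S.ht v - ⟪v, S.α i⟫_ℝ := by
  simp [refl_apply, S.ht_alpha]

theorem refl_alpha_of_orth {i j : Fin S.n} (h : ⟪S.α i, S.α j⟫_ℝ = 0) :
    S.refl j (S.α i) = S.α i := by simp [refl_apply, h]

theorem refl_comm {i j : Fin S.n} (h : ⟪S.α i, S.α j⟫_ℝ = 0) (v : V) :
    S.refl i (S.refl j v) = S.refl j (S.refl i v) := by
  have h' : ⟪S.α j, S.α i⟫_ℝ = 0 := by rw [real_inner_comm, h]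
  simp only [refl_apply, inner_sub_left, inner_smul_left, h, h']
  simp
  abel

/-- A fundamental reflection permutes the positive roots other than its own simple root: the
heights of `β` and `-r i β` add up to `⟪β, α i⟫ ≤ 1`, so they cannot both be positive. -/
theorem refl_pos {i : Fin S.n} {β : V} (hβ : β ∈ S.Pos) (hne : β ≠ S.α i) :
    S.refl i β ∈ S.Pos := by
  have hr : S.refl i β ∈ S.Φ := S.reflect_mem β (S.pos_subset hβ) _ (S.alpha_root i)
  rcases S.mem_pos_or_neg _ hr with h | h
  · exact h
  exfalso
  obtain ⟨n, hn, e⟩ := S.pos_ht h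
  obtain ⟨m, hm, em⟩ := S.pos_ht hβ
  rw [map_neg, ht_refl, em] at e
  have hn' : (1 : ℝ) ≤ n := by exact_mod_cast hn
  have hm' : (1 : ℝ) ≤ m := by exact_mod_cast hm
  rcases S.inner_cases hβ (S.alpha_pos i) with h1 | h1 | h1 | h1
  · exact hne h1
  all_goals rw [h1] at e; linarith

theorem rAct_eq_image {i : Fin S.n} {B : Set V} (hB : B ⊆ S.Pos) (hα : S.α i ∉ B) :
    S.rAct i B = S.refl i '' B := by
  have key : ∀ β ∈ B, S.refl i β ∈ S.Pos := fun β hβ =>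
    S.refl_pos (hB hβ) (fun h => hα (h ▸ hβ))
  ext x
  constructor
  · rintro ⟨hx, β, hβ, h | h⟩
    · exact ⟨β, hβ, h⟩
    · exact absurd (h ▸ key β hβ) (S.not_pos_and_neg x hx)
  · rintro ⟨β, hβ, rfl⟩
    exact ⟨key β hβ, β, hβ, Or.inl rfl⟩

theorem rAct_eq_self {i : Fin S.n} {B : Set V} (hB : S.IsOrthoSet B) (hα : S.α i ∈ B) :
    S.rAct i B = B := by
  have h1 : ∀ β ∈ B, β ≠ S.α i → S.refl i β = β := fun β hβ hne => by
    simp [refl_apply, hB.2 β hβ _ hα hne]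
  have h2 : S.refl i (S.α i) = -S.α i := by
    rw [refl_apply, S.norm_two _ (S.alpha_root i), two_smul]; abel
  ext x
  constructor
  · rintro ⟨hx, β, hβ, h⟩
    by_cases e : β = S.α i
    · rw [e, h2] at h
      rcases h with h | h
      · rw [← h] at hx
        exact absurd hx (S.not_pos_and_neg _ (S.alpha_pos i))
      · rw [← neg_injective h]; exact hα
    · rw [h1 β hβ e] at h
      rcases h with h | h
      · exact h ▸ hβ
      · exact absurd (h ▸ hB.1 hβ) (S.not_pos_and_neg x hx)
  · intro hx
    refine ⟨hB.1 hx, x, hx, ?_⟩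
    by_cases e : x = S.α i
    · right; rw [e, h2]
    · left; exact h1 x hx e

theorem orthoSet_rAct (i : Fin S.n) {B : Set V} (hB : S.IsOrthoSet B) :
    S.IsOrthoSet (S.rAct i B) := by
  by_cases hα : S.α i ∈ B
  · rwa [S.rAct_eq_self hB hα]
  refine ⟨fun x hx => hx.1, ?_⟩
  rw [S.rAct_eq_image hB.1 hα]
  rintro _ ⟨β, hβ, rfl⟩ _ ⟨γ, hγ, rfl⟩ hne
  rw [inner_refl_refl]
  exact hB.2 β hβ γ hγ (fun h => hne (by rw [h]))

theorem orthoSet_of_mem_orbit {B C : Set V} (hB : S.IsOrthoSet B) (hC : C ∈ S.orbitOf B) :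
    S.IsOrthoSet C := by
  change Relation.ReflTransGen _ B C at hC
  induction hC with
  | refl => exact hB
  | tail _ h ih =>
    obtain ⟨i, rfl⟩ := h
    exact S.orthoSet_rAct i ih

theorem rAct_mem_orbit {B C : Set V} (i : Fin S.n) (hC : C ∈ S.orbitOf B) :
    S.rAct i C ∈ S.orbitOf B := Relation.ReflTransGen.tail hC ⟨i, rfl⟩

theorem refl_notMem {i : Fin S.n} {B : Set V} (hB : S.IsOrthoSet B) (hα : S.α i ∉ B) {β : V}
    (hβ : β ∈ B) (hi : ⟪β, S.α i⟫_ℝ ≠ 0) : S.refl i β ∉ B := by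
  intro h
  have hne : β ≠ S.refl i β := by
    intro e
    have := S.inner_refl_alpha i β
    rw [← e] at this
    apply hi; linarith
  have h0 := hB.2 β hβ _ h hne
  rw [refl_apply, inner_sub_right, inner_smul_right, S.norm_two _ (S.pos_subset (hB.1 hβ))] at h0
  rcases S.inner_cases (hB.1 hβ) (S.alpha_pos i) with h1 | h1 | h1 | h1
  · exact hα (h1 ▸ hβ)
  all_goals rw [h1] at h0; norm_num at h0

theorem mem_diff_rAct {i : Fin S.n} {B : Set V} (hB : S.IsOrthoSet B) (hα : S.α i ∉ B) {β : V} :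
    β ∈ B \ S.rAct i B ↔ β ∈ B ∧ ⟪β, S.α i⟫_ℝ ≠ 0 := by
  rw [S.rAct_eq_image hB.1 hα]
  constructor
  · rintro ⟨hβ, h⟩
    refine ⟨hβ, fun h0 => h ⟨β, hβ, ?_⟩⟩
    simp [refl_apply, h0]
  · rintro ⟨hβ, h⟩
    refine ⟨hβ, ?_⟩
    rintro ⟨γ, hγ, rfl⟩
    rw [inner_refl_alpha, neg_ne_zero] at h
    exact S.refl_notMem hB hα hγ h hβ

theorem mem_rAct_diff {i : Fin S.n} {B : Set V} (hB : S.IsOrthoSet B) (hα : S.α i ∉ B) {x : V} :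
    x ∈ S.rAct i B \ B ↔ ∃ β ∈ B, ⟪β, S.α i⟫_ℝ ≠ 0 ∧ S.refl i β = x := by
  rw [S.rAct_eq_image hB.1 hα]
  constructor
  · rintro ⟨⟨β, hβ, rfl⟩, h⟩
    refine ⟨β, hβ, fun h0 => h ?_, rfl⟩
    simpa [refl_apply, h0] using hβ
  · rintro ⟨β, hβ, h, rfl⟩
    exact ⟨⟨β, hβ, rfl⟩, S.refl_notMem hB hα hβ h⟩

/-! ### The height order -/

/-- Membership of `α i` in `B` would make `B` a fixed point of `r i`. -/
theorem alpha_notMem_of_lt {i : Fin S.n} {B : Set V} (hB : S.IsOrthoSet B)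
    (h : S.lt B (S.rAct i B)) : S.α i ∉ B :=
  fun hα => h.1 (S.rAct_eq_self hB hα).symm

/-- The order relation `B < r i · B` in terms of inner products with `α i`. Heights are
integers, which is why a root lowered by `r i` lies at least `2` above the lowest moved root. -/
theorem lt_rAct_iff {i : Fin S.n} {B : Set V} (hB : S.IsOrthoSet B) (hα : S.α i ∉ B) :
    S.lt B (S.rAct i B) ↔ ∃ β₀ ∈ B, ⟪β₀, S.α i⟫_ℝ = -1 ∧
      ∀ β ∈ B, ⟪β, S.α i⟫_ℝ = 1 → S.ht β₀ + 2 ≤ S.ht β := by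
  have fin1 : (B \ S.rAct i B).Finite :=
    S.finite.subset fun x hx => S.pos_subset (hB.1 hx.1)
  have fin2 : (S.rAct i B \ B).Finite := S.finite.subset fun x hx => S.pos_subset hx.1.1
  constructor
  · rintro ⟨hne, hlt⟩
    have hnonempty : (B \ S.rAct i B).Nonempty := by
      by_contra hemp
      rw [Set.not_nonempty_iff_eq_empty] at hemp
      have hsub : B ⊆ S.rAct i B := Set.sdiff_eq_empty.1 hemp
      refine hne (hsub.antisymm fun x hx => ?_)
      by_contra hxB
      obtain ⟨β, hβ, h0, -⟩ := (S.mem_rAct_diff hB hα).1 ⟨hx, hxB⟩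
      exact ((S.mem_diff_rAct hB hα).2 ⟨hβ, h0⟩).2 (hsub hβ)
    obtain ⟨β₀, hβ₀, hmin⟩ := Set.exists_min_image _ S.ht fin1 hnonempty
    have hinf : sInf (S.ht '' (B \ S.rAct i B)) = S.ht β₀ := by
      refine IsLeast.csInf_eq ⟨⟨β₀, hβ₀, rfl⟩, ?_⟩
      rintro _ ⟨x, hx, rfl⟩
      exact hmin x hx
    have hall : ∀ β ∈ B, ⟪β, S.α i⟫_ℝ ≠ 0 → S.ht β₀ < S.ht β - ⟪β, S.α i⟫_ℝ := by
      intro β hβ h0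
      rw [← ht_refl, ← hinf]
      exact hlt.trans_le (csInf_le (fin2.image _).bddBelow
        ⟨_, (S.mem_rAct_diff hB hα).2 ⟨β, hβ, h0, rfl⟩, rfl⟩)
    obtain ⟨hβ₀B, hβ₀i⟩ := (S.mem_diff_rAct hB hα).1 hβ₀
    refine ⟨β₀, hβ₀B, ?_, ?_⟩
    · have := hall β₀ hβ₀B hβ₀i
      rcases S.inner_cases (hB.1 hβ₀B) (S.alpha_pos i) with h1 | h1 | h1 | h1
      · exact absurd (h1 ▸ hβ₀B) hα
      · exact h1
      · exact absurd h1 hβ₀i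
      · rw [h1] at this; linarith
    · intro β hβ h1
      have := hall β hβ (by rw [h1]; norm_num)
      obtain ⟨n, -, e⟩ := S.pos_ht (hB.1 hβ)
      obtain ⟨m, -, em⟩ := S.pos_ht (hB.1 hβ₀B)
      rw [h1, e, em] at this
      rw [e, em]
      have h3 : m + 1 < n := by
        have : (m : ℝ) + 1 < n := by linarith
        exact_mod_cast this
      have h4 : m + 2 ≤ n := h3
      exact_mod_cast h4
  · rintro ⟨β₀, hβ₀, h1, h2⟩
    have m1 : β₀ ∈ B \ S.rAct i B := (S.mem_diff_rAct hB hα).2 ⟨hβ₀, by rw [h1]; norm_num⟩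
    have hne2 : (S.rAct i B \ B).Nonempty :=
      ⟨_, (S.mem_rAct_diff hB hα).2 ⟨β₀, hβ₀, by rw [h1]; norm_num, rfl⟩⟩
    refine ⟨fun e => m1.2 (e ▸ hβ₀), ?_⟩
    obtain ⟨c, hc, hmin⟩ := Set.exists_min_image _ S.ht fin2 hne2
    have hinf : sInf (S.ht '' (S.rAct i B \ B)) = S.ht c := by
      refine IsLeast.csInf_eq ⟨⟨c, hc, rfl⟩, ?_⟩
      rintro _ ⟨x, hx, rfl⟩
      exact hmin x hx
    rw [hinf]
    have hle : ∀ β ∈ B \ S.rAct i B, sInf (S.ht '' (B \ S.rAct i B)) ≤ S.ht β := fun β hβ =>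
      csInf_le (fin1.image _).bddBelow ⟨β, hβ, rfl⟩
    obtain ⟨β, hβ, h0, rfl⟩ := (S.mem_rAct_diff hB hα).1 hc
    rw [ht_refl]
    rcases S.inner_cases (hB.1 hβ) (S.alpha_pos i) with h3 | h3 | h3 | h3
    · exact absurd (h3 ▸ hβ) hα
    · have := hle β ((S.mem_diff_rAct hB hα).2 ⟨hβ, h0⟩)
      rw [h3]; linarith
    · exact absurd h3 h0
    · have := hle β₀ m1
      have := h2 β hβ h3
      rw [h3]; linarith

/-! ### Two orthogonal simple roots -/

theorem alpha_notMem_rAct {i j : Fin S.n} {B : Set V} (hB : S.IsOrthoSet B)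
    (hij : ⟪S.α i, S.α j⟫_ℝ = 0) (hi : S.α i ∉ B) (hj : S.α j ∉ B) : S.α i ∉ S.rAct j B := by
  rw [S.rAct_eq_image hB.1 hj]
  rintro ⟨β, hβ, h⟩
  have := congrArg (S.refl j) h
  rw [refl_refl, S.refl_alpha_of_orth hij] at this
  exact hi (this ▸ hβ)

theorem rAct_rAct_self {i : Fin S.n} {B : Set V} (hB : S.IsOrthoSet B) (hi : S.α i ∉ B) :
    S.rAct i (S.rAct i B) = B := by
  have h : S.α i ∉ S.rAct i B := by
    rw [S.rAct_eq_image hB.1 hi]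
    rintro ⟨β, hβ, h⟩
    have h1 := S.pos_subset (hB.1 hβ)
    have h2 : β = -S.α i := by
      rw [← S.refl_refl i β, h, refl_apply, S.norm_two _ (S.alpha_root i), two_smul]; abel
    exact S.not_pos_and_neg _ (S.alpha_pos i) (h2 ▸ hB.1 hβ)
  rw [S.rAct_eq_image (S.orthoSet_rAct i hB).1 h, S.rAct_eq_image hB.1 hi, Set.image_image]
  simp [refl_refl]

theorem rAct_comm {i j : Fin S.n} {B : Set V} (hB : S.IsOrthoSet B)
    (hij : ⟪S.α i, S.α j⟫_ℝ = 0) (hi : S.α i ∉ B) (hj : S.α j ∉ B) :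
    S.rAct i (S.rAct j B) = S.rAct j (S.rAct i B) := by
  have hji : ⟪S.α j, S.α i⟫_ℝ = 0 := by rw [real_inner_comm, hij]
  rw [S.rAct_eq_image (S.orthoSet_rAct j hB).1 (S.alpha_notMem_rAct hB hij hi hj),
    S.rAct_eq_image (S.orthoSet_rAct i hB).1 (S.alpha_notMem_rAct hB hji hj hi),
    S.rAct_eq_image hB.1 hi, S.rAct_eq_image hB.1 hj, Set.image_image, Set.image_image]
  simp only [S.refl_comm hij]

/-- If `r i` raises `B`, it still raises `r j · B` for an orthogonal node `j`, unless `r j · B`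
contains a pair `γ`, `γ - α i + α j`. -/
theorem lt_step {i j : Fin S.n} {B : Set V} (hB : S.IsOrthoSet B)
    (hij : ⟪S.α i, S.α j⟫_ℝ = 0) (hi : S.α i ∉ B) (hj : S.α j ∉ B)
    (hlt : S.lt B (S.rAct i B))
    (hno : ¬ ∃ γ, γ ∈ S.rAct j B ∧ γ - S.α i + S.α j ∈ S.rAct j B) :
    S.lt (S.rAct j B) (S.rAct i (S.rAct j B)) := by
  have hji : ⟪S.α j, S.α i⟫_ℝ = 0 := by rw [real_inner_comm, hij]
  have himg := S.rAct_eq_image hB.1 hj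
  have hin : ∀ v, ⟪S.refl j v, S.α i⟫_ℝ = ⟪v, S.α i⟫_ℝ := fun v => by
    simp [refl_apply, inner_sub_left, inner_smul_left, hji]
  have hnii := S.norm_two _ (S.alpha_root i)
  have hnjj := S.norm_two _ (S.alpha_root j)
  obtain ⟨β₀, hβ₀, h0i, hmin⟩ := (S.lt_rAct_iff hB hi).1 hlt
  rw [S.lt_rAct_iff (S.orthoSet_rAct j hB) (S.alpha_notMem_rAct hB hij hi hj), himg]
  refine ⟨S.refl j β₀, ⟨β₀, hβ₀, rfl⟩, by rw [hin, h0i], ?_⟩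
  rintro _ ⟨β, hβ, rfl⟩ h1i
  rw [hin] at h1i
  have hm := hmin β hβ h1i
  rw [ht_refl, ht_refl]
  have horth : ⟪β, β₀⟫_ℝ = 0 := hB.2 β hβ β₀ hβ₀ (fun e => by
    rw [e, h0i] at h1i; norm_num at h1i)
  have rβ := S.pos_subset (hB.1 hβ)
  have rβ₀ := S.pos_subset (hB.1 hβ₀)
  have ri := S.alpha_root i
  have rj := S.alpha_root j
  have ci := real_inner_comm β₀ (S.α i)
  have cj := real_inner_comm β₀ (S.α j)
  -- `β - α i` is a root, and so is every further difference of roots with inner product `1`.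
  have r1 : β - S.α i ∈ S.Φ := S.sub_root rβ ri h1i
  obtain ⟨n, -, e⟩ := S.pos_ht (hB.1 hβ)
  obtain ⟨m, -, em⟩ := S.pos_ht (hB.1 hβ₀)
  -- Heights are integers, so by `hm` a height below `ht β₀ + 3` can only be `ht β₀ + 2`.
  have hint : S.ht β < S.ht β₀ + 3 → S.ht β = S.ht β₀ + 2 := by
    intro h
    rw [e, em] at h hm ⊢
    have a1 : n < m + 3 := by exact_mod_cast h
    have a2 : m + 2 ≤ n := by exact_mod_cast hm
    have : n = m + 2 := by omega
    exact_mod_cast this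
  have hcases : ∀ x ∈ B, ⟪x, S.α j⟫_ℝ = -1 ∨ ⟪x, S.α j⟫_ℝ = 0 ∨ ⟪x, S.α j⟫_ℝ = 1 := fun x hx =>
    (S.inner_cases (hB.1 hx) (S.alpha_pos j)).resolve_left fun h => hj (h ▸ hx)
  rcases hcases β₀ hβ₀ with h0j | h0j | h0j <;> rcases hcases β hβ with h1j | h1j | h1j
  all_goals rw [h0j, h1j]
  all_goals try linarith
  · by_contra! hcon
    have hht := hint (by linarith)
    have r2 : β - S.α i - β₀ ∈ S.Φ := S.sub_root r1 rβ₀ (by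
      rw [inner_sub_left, ci, horth, h0i]; norm_num)
    have r3 : β - S.α i - β₀ - S.α j ∈ S.Φ := S.sub_root r2 rj (by
      rw [inner_sub_left, inner_sub_left, h1j, hij, h0j]; norm_num)
    exact S.root_ht_ne r3 (by simp only [map_sub, S.ht_alpha]; linarith)
  · exfalso
    have hz : β - S.α i - S.α j - β₀ = 0 := by
      rw [← inner_self_eq_zero (𝕜 := ℝ)]
      have c1 := real_inner_comm β (S.α i)
      have c2 := real_inner_comm β (S.α j)
      have c3 := real_inner_comm β β₀
      simp only [inner_sub_left, inner_sub_right]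
      have n1 := S.norm_two _ rβ
      have n2 := S.norm_two _ rβ₀
      linarith
    refine hno ⟨β - S.α j, ?_, ?_⟩
    · rw [himg]; exact ⟨β, hβ, by simp [refl_apply, h1j]⟩
    · rw [himg]
      refine ⟨β₀, hβ₀, ?_⟩
      rw [refl_apply, h0j, ← sub_eq_zero, ← neg_eq_zero, ← hz, neg_smul, one_smul]
      abel
  · by_contra! hcon
    have hht := hint (by linarith)
    have r2 : β - S.α i - S.α j ∈ S.Φ := S.sub_root r1 rj (by
      rw [inner_sub_left, h1j, hij]; norm_num)
    have r3 : β - S.α i - S.α j - β₀ ∈ S.Φ := S.sub_root r2 rβ₀ (by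
      rw [inner_sub_left, inner_sub_left, ci, cj, horth, h0i, h0j]; norm_num)
    exact S.root_ht_ne r3 (by simp only [map_sub, S.ht_alpha]; linarith)

/-- Equality `r i r j · B = r j r j · B = B` forces `r i · B = r j · B`, so admissibility of
`r j · B` excludes the exceptional pair in `lt_step`. -/
theorem lt_step_of_admissible {𝓑 : Set (Set V)} (hadm : S.Admissible 𝓑) {i j : Fin S.n}
    {B : Set V} (hB𝓑 : B ∈ 𝓑) (hB : S.IsOrthoSet B) (hne : i ≠ j) (hnadj : ¬ S.adj i j)
    (hij : ⟪S.α i, S.α j⟫_ℝ = 0) (hi : S.α i ∉ B) (hj : S.α j ∉ B)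
    (hlt : S.lt B (S.rAct i B)) (hdiff : S.rAct i B ≠ S.rAct j B) :
    S.lt (S.rAct j B) (S.rAct i (S.rAct j B)) := by
  refine S.lt_step hB hij hi hj hlt fun hex => hdiff ?_
  have hmem : S.rAct j B ∈ 𝓑 := by
    obtain ⟨⟨B₀, -, rfl⟩, -⟩ := hadm
    exact S.rAct_mem_orbit j hB𝓑
  have h := hadm.2 _ hmem i j hne hnadj hex
  rw [S.rAct_rAct_self hB hj] at h
  rw [← S.rAct_rAct_self (S.orthoSet_rAct j hB) (S.alpha_notMem_rAct hB hij hi hj), h]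

end Aux

end SLRS

/-- Lemma 3.4(ii): for `𝓑` admissible, `B ∈ 𝓑`, nodes
`i ≠ j` with `i ≁ j`: if `B < r i · B`, `B < r j · B` and `r i · B ≠ r j · B`,
then `r i r j · B > r i · B` and `r i r j · B > r j · B`. -/
theorem raise_raise_nonadjacent (S : SLRS V) (𝓑 : Set (Set V))
    (hadm : S.Admissible 𝓑) (B : Set V) (hB : B ∈ 𝓑) (i j : Fin S.n)
    (hne : i ≠ j) (hnadj : ¬ S.adj i j)
    (hi : S.lt B (S.rAct i B)) (hj : S.lt B (S.rAct j B))
    (hij : S.rAct i B ≠ S.rAct j B) :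
    S.lt (S.rAct i B) (S.rAct i (S.rAct j B)) ∧
    S.lt (S.rAct j B) (S.rAct i (S.rAct j B)) := by
  have hO : S.IsOrthoSet B := by
    obtain ⟨⟨B₀, h₀, rfl⟩, -⟩ := hadm
    exact S.orthoSet_of_mem_orbit h₀ hB
  have hαi := S.alpha_notMem_of_lt hO hi
  have hαj := S.alpha_notMem_of_lt hO hj
  -- The nodes are not assumed to label distinct simple roots, but equal ones act equally.
  have hα : S.α i ≠ S.α j := fun e => hij (by simp only [rAct, SLRS.refl, e])
  have horth := S.alpha_orth hα hnadj
  have horth' : ⟪S.α j, S.α i⟫_ℝ = 0 := by rw [real_inner_comm, horth]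
  have hnadj' : ¬ S.adj j i := fun h => hnadj (by rw [adj, real_inner_comm]; exact h)
  refine ⟨?_, S.lt_step_of_admissible hadm hB hO hne hnadj horth hαi hαj hi hij⟩
  rw [S.rAct_comm hO horth hαi hαj]
  exact S.lt_step_of_admissible hadm hB hO hne.symm hnadj' horth' hαj hαi hj hij.symm
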